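/- Deterministic error decomposition of the loop estimator: Let (X_t, R_t)_{t≥0} be a finite Markov reward process with X_0 = s, s positive recurrent, and γ ∈ [0,1). Then almost surely, for every n ≥ 1, |v̂_n(s) − v(s)| ≤ (1 − γ)^{-1}·( |β̂_n(s) − β(s)| + |α̂_n(s) − α(s)|·v(s) ), where v̂_n(s) = β̂_n(s)/(1 − α̂_n(s)) is the n-th loop estimator. -/

import Mathlib

open MeasureTheory ProbabilityTheory Filter
open scoped ENNReal ENat

noncomputable section

/-- The first return time to `s` of the process `X` (`⊤` if `s` is never revisited). -/
def retTime {S Ω : Type*} (X : ℕ → Ω → S) (s : S) (ω : Ω) : ℕ∞ :=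
  ⨅ (m : ℕ) (_ : 0 < m ∧ X m ω = s), (m : ℕ∞)

/-- `waitTime X s n ω`: the step of the `n`-th visit of the process `X` to `s`. -/
def waitTime {S Ω : Type*} [DecidableEq S] (X : ℕ → Ω → S) (s : S) (n : ℕ) (ω : Ω) : ℕ∞ :=
  ⨅ (w : ℕ) (_ : n ≤ ∑ t ∈ Finset.range (w + 1), if X t ω = s then 1 else 0), (w : ℕ∞)

/-- The `n`-th interarrival time `I_n(s) = W_{n+1}(s) - W_n(s)`. -/
def interTime {S Ω : Type*} [DecidableEq S] (X : ℕ → Ω → S) (s : S) (n : ℕ) (ω : Ω) : ℕ∞ :=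
  waitTime X s (n + 1) ω - waitTime X s n ω

/-- `γ` raised to a possibly-infinite power (`γ^⊤ = 0`, as appropriate for `γ < 1`). -/
def discPow (γ : ℝ) (n : ℕ∞) : ℝ :=
  if n = ⊤ then 0 else γ ^ n.toNat

/-- The `n`-th loop `γ`-discounted rewards `G_n(s) = ∑_{u=0}^{I_n(s)-1} γ^u R_{W_n(s)+u}`. -/
def loopReward {S Ω : Type*} [DecidableEq S] (γ : ℝ) (X : ℕ → Ω → S) (R : ℕ → Ω → ℝ)
    (s : S) (n : ℕ) (ω : Ω) : ℝ :=
  ∑' u : ℕ, if (u : ℕ∞) < interTime X s n ω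
    then γ ^ u * R ((waitTime X s n ω).toNat + u) ω else 0

/-- The empirical mean `α̂_n(s) = (1/n) ∑_{i=1}^n γ^{I_i(s)}` of the loop discounts. -/
def loopAlphaHat {S Ω : Type*} [DecidableEq S] (γ : ℝ) (X : ℕ → Ω → S) (s : S) (n : ℕ)
    (ω : Ω) : ℝ :=
  (∑ i ∈ Finset.Icc 1 n, discPow γ (interTime X s i ω)) / n

/-- The empirical mean `β̂_n(s) = (1/n) ∑_{i=1}^n G_i(s)` of the loop discounted rewards. -/
def loopBetaHat {S Ω : Type*} [DecidableEq S] (γ : ℝ) (X : ℕ → Ω → S) (R : ℕ → Ω → ℝ)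
    (s : S) (n : ℕ) (ω : Ω) : ℝ :=
  (∑ i ∈ Finset.Icc 1 n, loopReward γ X R s i ω) / n

/-- The `n`-th loop estimator `v̂_n(s) = β̂_n(s) / (1 - α̂_n(s))`. -/
def loopEst {S Ω : Type*} [DecidableEq S] (γ : ℝ) (X : ℕ → Ω → S) (R : ℕ → Ω → ℝ)
    (s : S) (n : ℕ) (ω : Ω) : ℝ :=
  loopBetaHat γ X R s n ω / (1 - loopAlphaHat γ X s n ω)

/-!
At its first return to `s` the process regenerates, so the value satisfies the renewal equation
`v = β + α v`. Hence `v̂ₙ - v = ((β̂ₙ - β) + (α̂ₙ - α) v) / (1 - α̂ₙ)`. By recurrence `s` is visited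
infinitely often, so every loop has a genuine length, at least `1`; therefore `α̂ₙ ≤ γ`, which
bounds the denominator below by `1 - γ`.
-/

theorem abs_div_one_sub_sub_le {γ a b v α β : ℝ} (hγ : γ < 1) (ha : a ≤ γ)
    (hv : v = β + α * v) :
    |b / (1 - a) - v| ≤ (1 - γ)⁻¹ * (|b - β| + |a - α| * |v|) := by
  have hpos : 0 < 1 - a := by linarith
  have herr : b / (1 - a) - v = (1 - a)⁻¹ * (b - β + (a - α) * v) := by
    field_simp
    linarith
  calc |b / (1 - a) - v| = (1 - a)⁻¹ * |b - β + (a - α) * v| := by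
        rw [herr, abs_mul, abs_of_pos (inv_pos.2 hpos)]
    _ ≤ (1 - γ)⁻¹ * (|b - β| + |(a - α) * v|) := by
        gcongr
        exact abs_add_le _ _
    _ = (1 - γ)⁻¹ * (|b - β| + |a - α| * |v|) := by rw [abs_mul]

theorem iInf_natCast_le_iff {p : ℕ → Prop} {n : ℕ} :
    ⨅ (k : ℕ) (_ : p k), (k : ℕ∞) ≤ n ↔ ∃ k ≤ n, p k := by
  refine ⟨fun h ↦ ?_, fun ⟨k, hkn, hk⟩ ↦ (iInf₂_le k hk).trans (Nat.cast_le.2 hkn)⟩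
  have hlt : ⨅ (k : ℕ) (_ : p k), (k : ℕ∞) < (n + 1 : ℕ) :=
    h.trans_lt (Nat.cast_lt.2 n.lt_succ_self)
  obtain ⟨k, hk, hkn⟩ := by simpa only [iInf_lt_iff] using hlt
  exact ⟨k, Nat.lt_succ_iff.1 (Nat.cast_lt.1 hkn), hk⟩

theorem tsum_measure_inter_preimage_singleton {α ι : Type*} [MeasurableSpace α] [Countable ι]
    (μ : Measure α) {f : α → ι} (hf : ∀ y, MeasurableSet (f ⁻¹' {y})) (A : Set α) :
    ∑' y, μ (A ∩ f ⁻¹' {y}) = μ A := by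
  have hrestrict (y : ι) : μ (A ∩ f ⁻¹' {y}) = μ.restrict A (f ⁻¹' {y}) := by
    rw [Measure.restrict_apply (hf y), Set.inter_comm]
  simp only [hrestrict]
  rw [← tsum_univ fun y ↦ μ.restrict A (f ⁻¹' {y}),
    tsum_measure_preimage_singleton Set.countable_univ fun y _ ↦ hf y, Set.preimage_univ,
    Measure.restrict_apply_univ]

theorem pi_inter_setOf_fst_eq {S E : Type*} {J : Finset ℕ} {t : ℕ} (hJ : J ⊆ Finset.range (t + 1))
    (D : ℕ → Set (S × E)) (x : ℕ → S) :
    (J : Set ℕ).pi D ∩ {z | ∀ i ≤ t, (z i).1 = x i}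
      = {z | ∀ i ≤ t, (z i).1 = x i ∧
          (z i).2 ∈ if i ∈ J then Prod.mk (x i) ⁻¹' D i else Set.univ} := by
  ext z
  have hmem (i : ℕ) (hz : (z i).1 = x i) : z i ∈ D i ↔ (z i).2 ∈ Prod.mk (x i) ⁻¹' D i := by
    rw [← hz, Set.mem_preimage]
  grind

section CountableStateSpace

variable {Ω S E : Type*} [MeasurableSpace Ω] [Countable S] [MeasurableSpace S]
  [MeasurableSingletonClass S] [MeasurableSpace E]

theorem measure_eq_of_forall_history {X : ℕ → Ω → S} (hX : ∀ i, Measurable (X i)) (m : ℕ)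
    {μ κ : Measure Ω} {A B : Set Ω}
    (h : ∀ ω₀, μ (A ∩ {ω | ∀ i ≤ m, X i ω = X i ω₀}) = κ (B ∩ {ω | ∀ i ≤ m, X i ω = X i ω₀})) :
    μ A = κ B := by
  let history (ω : Ω) (i : Fin (m + 1)) : S := X i ω
  have hmeas (y : Fin (m + 1) → S) : MeasurableSet (history ⁻¹' {y}) :=
    measurable_pi_lambda history (fun i ↦ hX i) (measurableSet_singleton y)
  rw [← tsum_measure_inter_preimage_singleton μ hmeas,
    ← tsum_measure_inter_preimage_singleton κ hmeas]
  refine tsum_congr fun y ↦ ?_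
  obtain hy | ⟨ω₀, rfl⟩ := (history ⁻¹' {y}).eq_empty_or_nonempty
  · simp only [hy, Set.inter_empty, measure_empty]
  · have hfiber : history ⁻¹' {history ω₀} = {ω | ∀ i ≤ m, X i ω = X i ω₀} := by
      ext ω
      simp only [Set.mem_preimage, Set.mem_singleton_iff, funext_iff, Fin.forall_iff,
        Nat.lt_succ_iff, Set.mem_ofPred_eq, history]
    rw [hfiber, h]

theorem measure_path_ext {κ₁ κ₂ : Measure (ℕ → S × E)} [IsFiniteMeasure κ₁]
    (h : ∀ (t : ℕ) (x : ℕ → S) (B : ℕ → Set E), (∀ i, MeasurableSet (B i)) →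
      κ₁ {z | ∀ i ≤ t, (z i).1 = x i ∧ (z i).2 ∈ B i}
        = κ₂ {z | ∀ i ≤ t, (z i).1 = x i ∧ (z i).2 ∈ B i}) :
    κ₁ = κ₂ := by
  have hpi {J : Finset ℕ} {D : ℕ → Set (S × E)} (hD : ∀ i, MeasurableSet (D i)) :
      κ₁ ((J : Set ℕ).pi D) = κ₂ ((J : Set ℕ).pi D) := by
    obtain ⟨t, hJ⟩ := J.exists_nat_subset_range
    have hJt : J ⊆ Finset.range (t + 1) := hJ.trans (Finset.range_mono t.le_succ)
    refine measure_eq_of_forall_history (X := fun i z ↦ (z i).1) (fun i ↦ by fun_prop) t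
      fun z₀ ↦ ?_
    rw [pi_inter_setOf_fst_eq hJt]
    refine h t _ _ fun i ↦ ?_
    split_ifs
    exacts [measurable_prodMk_left (hD i), .univ]
  refine ext_of_generate_finite _ generateFrom_squareCylinders.symm
    (isPiSystem_squareCylinders (fun _ ↦ MeasurableSpace.isPiSystem_measurableSet)
      fun _ ↦ by simp) ?_ ?_
  · rintro _ ⟨J, D, hD, rfl⟩
    exact hpi fun i ↦ hD i (Set.mem_univ i)
  · simpa using hpi (J := ∅) fun _ ↦ MeasurableSet.univ

end CountableStateSpace

section DiscountedPower

variable {γ : ℝ}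

@[simp]
theorem discPow_top : discPow γ ⊤ = 0 := if_pos rfl

@[simp]
theorem discPow_natCast (n : ℕ) : discPow γ n = γ ^ n := by
  rw [discPow, if_neg (ENat.natCast_ne_top n), ENat.toNat_natCast]

theorem abs_discPow_le_one (hγ0 : 0 ≤ γ) (hγ1 : γ ≤ 1) (n : ℕ∞) : |discPow γ n| ≤ 1 := by
  induction n with
  | top => simp
  | coe n => simpa [abs_of_nonneg hγ0] using pow_le_one₀ hγ0 hγ1

theorem discPow_le_of_one_le (hγ0 : 0 ≤ γ) (hγ1 : γ ≤ 1) {n : ℕ∞} (hn : 1 ≤ n) :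
    discPow γ n ≤ γ := by
  induction n with
  | top => simpa using hγ0
  | coe n => simpa using pow_le_of_le_one hγ0 hγ1 (Nat.one_le_iff_ne_zero.1 (Nat.one_le_cast.1 hn))

end DiscountedPower

section DiscountedSum

variable {γ C : ℝ} {r : ℕ → ℝ}

/-- The discounted sum of a stream of rewards, whose expectation is the value of the process. -/
def discountedSum (γ : ℝ) (r : ℕ → ℝ) : ℝ :=
  ∑' t, γ ^ t * r t

/-- The discounted sum of the rewards collected strictly before time `T`. -/
def discountedSumUntil (γ : ℝ) (r : ℕ → ℝ) (T : ℕ∞) : ℝ :=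
  ∑' t : ℕ, if t < T then γ ^ t * r t else 0

theorem norm_pow_mul_le (hγ0 : 0 ≤ γ) (hr : ∀ t, |r t| ≤ C) (t : ℕ) :
    ‖γ ^ t * r t‖ ≤ γ ^ t * C := by
  rw [norm_mul, norm_pow, Real.norm_of_nonneg hγ0]
  exact mul_le_mul_of_nonneg_left (hr t) (pow_nonneg hγ0 t)

theorem hasSum_geometric_mul (hγ0 : 0 ≤ γ) (hγ1 : γ < 1) (C : ℝ) :
    HasSum (fun t ↦ γ ^ t * C) ((1 - γ)⁻¹ * C) :=
  (hasSum_geometric_of_lt_one hγ0 hγ1).mul_right C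

theorem abs_discountedSum_le (hγ0 : 0 ≤ γ) (hγ1 : γ < 1) (hr : ∀ t, |r t| ≤ C) :
    |discountedSum γ r| ≤ (1 - γ)⁻¹ * C :=
  tsum_of_norm_bounded (hasSum_geometric_mul hγ0 hγ1 C) (norm_pow_mul_le hγ0 hr)

theorem discountedSum_eq_until_add (hγ0 : 0 ≤ γ) (hγ1 : γ < 1) (hr : ∀ t, |r t| ≤ C) (T : ℕ∞) :
    discountedSum γ r = discountedSumUntil γ r T
      + discPow γ T * discountedSum γ (fun t ↦ r (t + T.toNat)) := by
  induction T with
  | top => simp [discountedSum, discountedSumUntil]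
  | coe T =>
    have hsum : Summable fun t ↦ γ ^ t * r t :=
      .of_norm_bounded (hasSum_geometric_mul hγ0 hγ1 C).summable (norm_pow_mul_le hγ0 hr)
    have huntil : discountedSumUntil γ r T = ∑ t ∈ Finset.range T, γ ^ t * r t := by
      rw [discountedSumUntil, tsum_eq_sum (s := Finset.range T) fun t ht ↦
        if_neg (by simpa using ht)]
      exact Finset.sum_congr rfl fun t ht ↦ if_pos (Nat.cast_lt.2 (Finset.mem_range.1 ht))
    rw [discountedSum, ← hsum.sum_add_tsum_nat_add T, huntil, discPow_natCast, ENat.toNat_natCast,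
      discountedSum, ← tsum_mul_left]
    simp only [pow_add, mul_comm, mul_left_comm]

theorem measurable_discountedSum (γ : ℝ) : Measurable (discountedSum γ) := by
  unfold discountedSum
  fun_prop

end DiscountedSum

section Visits

variable {S Ω : Type*} {X : ℕ → Ω → S} {s : S} {ω : Ω}

theorem retTime_le_natCast_iff {n : ℕ} :
    retTime X s ω ≤ n ↔ ∃ k ≤ n, 0 < k ∧ X k ω = s :=
  iInf_natCast_le_iff

theorem natCast_lt_retTime_iff {n : ℕ} :
    n < retTime X s ω ↔ ∀ k ≤ n, 0 < k → X k ω ≠ s := by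
  simp only [← not_le, retTime_le_natCast_iff, not_exists, not_and, ne_eq]

theorem retTime_eq_natCast_iff {m : ℕ} :
    retTime X s ω = m ↔ 0 < m ∧ X m ω = s ∧ ∀ k < m, 0 < k → X k ω ≠ s := by
  constructor
  · intro h
    have hnot : ∀ k < m, 0 < k → X k ω ≠ s := fun k hkm ↦
      natCast_lt_retTime_iff.1 (h ▸ Nat.cast_lt.2 hkm) k le_rfl
    obtain ⟨k, hkm, hk, hX⟩ := retTime_le_natCast_iff.1 h.le
    obtain rfl : k = m := hkm.eq_of_not_lt fun hlt ↦ hnot k hlt hk hX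
    exact ⟨hk, hX, hnot⟩
  · rintro ⟨hm, hX, hnot⟩
    exact le_antisymm (retTime_le_natCast_iff.2 ⟨m, le_rfl, hm, hX⟩)
      (le_iInf₂ fun k hk ↦ Nat.cast_le.2 (not_lt.1 fun hlt ↦ hnot k hlt hk.1 hk.2))

theorem retTime_ne_top_iff : retTime X s ω ≠ ⊤ ↔ ∃ k, 0 < k ∧ X k ω = s := by
  simp only [retTime, ne_eq, iInf₂_eq_top, ENat.natCast_ne_top, imp_false, not_forall, not_not]

theorem measurable_retTime [MeasurableSpace S] [MeasurableSingletonClass S] [MeasurableSpace Ω]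
    (hX : ∀ t, Measurable (X t)) (s : S) : Measurable (retTime X s) := by
  refine ENat.measurable_iff.2 fun m ↦ ?_
  have hvisit (k : ℕ) : Measurable fun ω ↦ X k ω = s :=
    measurableSet_setOfPred.1 (hX k (measurableSet_singleton s))
  simp only [Set.preimage, Set.mem_singleton_iff, retTime_eq_natCast_iff]
  exact measurableSet_setOfPred.2 <| measurable_const.and <| (hvisit m).and <|
    .forall fun k ↦ .forall fun _ ↦ .forall fun _ ↦ (hvisit k).not

theorem infinite_setOf_visit (h0 : X 0 ω = s)
    (hret : ∀ m, X m ω = s → ∃ k, 0 < k ∧ X (k + m) ω = s) :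
    {t | X t ω = s}.Infinite := by
  intro hfin
  obtain ⟨m, hm, hmax⟩ := Set.exists_max_image _ id hfin ⟨0, h0⟩
  obtain ⟨k, hk, hkm⟩ := hret m hm
  have hle : k + m ≤ m := hmax (k + m) hkm
  omega

variable [DecidableEq S]

theorem waitTime_eq_iInf_count (n : ℕ) :
    waitTime X s n ω = ⨅ (w : ℕ) (_ : n ≤ Nat.count (X · ω = s) (w + 1)), (w : ℕ∞) := by
  simp only [waitTime, Finset.sum_boole, Nat.count_eq_card_filter_range, Nat.cast_id]

theorem waitTime_le_natCast_iff {n w : ℕ} :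
    waitTime X s n ω ≤ w ↔ n ≤ Nat.count (X · ω = s) (w + 1) := by
  rw [waitTime_eq_iInf_count, iInf_natCast_le_iff]
  exact ⟨fun ⟨k, hkw, hk⟩ ↦ hk.trans (Nat.count_monotone _ (by omega)), fun h ↦ ⟨w, le_rfl, h⟩⟩

theorem waitTime_ne_top (hinf : {t | X t ω = s}.Infinite) (n : ℕ) : waitTime X s n ω ≠ ⊤ := by
  have hle : waitTime X s n ω ≤ (Nat.nth (X · ω = s) n : ℕ) := by
    rw [waitTime_le_natCast_iff]
    exact (Nat.count_nth_of_infinite hinf n).ge.trans (Nat.count_monotone _ (Nat.le_succ _))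
  exact ne_top_of_le_ne_top (ENat.natCast_ne_top _) hle

theorem waitTime_add_one_le {n : ℕ} (hn : 1 ≤ n) :
    waitTime X s n ω + 1 ≤ waitTime X s (n + 1) ω := by
  rw [waitTime_eq_iInf_count (n + 1)]
  refine le_iInf₂ fun w hw ↦ ?_
  rw [Nat.count_succ] at hw
  cases w with
  | zero => grind
  | succ w =>
    have hle : waitTime X s n ω ≤ w := waitTime_le_natCast_iff.2 (by split_ifs at hw <;> omega)
    exact_mod_cast add_le_add_left hle 1

theorem one_le_interTime (hinf : {t | X t ω = s}.Infinite) {n : ℕ} (hn : 1 ≤ n) :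
    1 ≤ interTime X s n ω :=
  ENat.le_sub_of_add_le_left (waitTime_ne_top hinf n) (waitTime_add_one_le hn)

theorem loopAlphaHat_le {γ : ℝ} (hγ0 : 0 ≤ γ) (hγ1 : γ ≤ 1) (hinf : {t | X t ω = s}.Infinite)
    (n : ℕ) : loopAlphaHat γ X s n ω ≤ γ := by
  have hsum : ∑ i ∈ Finset.Icc 1 n, discPow γ (interTime X s i ω) ≤ n * γ := by
    simpa using Finset.sum_le_card_nsmul _ _ γ fun i hi ↦
      discPow_le_of_one_le hγ0 hγ1 (one_le_interTime hinf (Finset.mem_Icc.1 hi).1)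
  exact div_le_of_le_mul₀ n.cast_nonneg hγ0 (by rwa [mul_comm])

theorem waitTime_one (h0 : X 0 ω = s) : waitTime X s 1 ω = 0 := by
  have hle : waitTime X s 1 ω ≤ (0 : ℕ) := by
    rw [waitTime_le_natCast_iff, Nat.count_succ, if_pos h0]
    exact Nat.le_add_left 1 _
  simpa using hle

theorem waitTime_two (h0 : X 0 ω = s) : waitTime X s 2 ω = retTime X s ω := by
  refine WithTop.eq_of_forall_le_coe_iff fun w ↦ ?_
  have hcount : 2 ≤ Nat.count (X · ω = s) (w + 1) ↔ Nat.count (fun k ↦ X (k + 1) ω = s) w ≠ 0 := by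
    rw [Nat.count_succ', if_pos h0]
    omega
  exact waitTime_le_natCast_iff.trans <| hcount.trans <| Nat.count_ne_iff_exists.trans <|
    (Iff.intro (fun ⟨k, hk, h⟩ ↦ ⟨k + 1, hk, k.succ_pos, h⟩)
      fun ⟨k, hk, h0, h⟩ ↦ ⟨k - 1, by omega, by rwa [Nat.sub_add_cancel h0]⟩).trans
      retTime_le_natCast_iff.symm

theorem interTime_one (h0 : X 0 ω = s) : interTime X s 1 ω = retTime X s ω := by
  rw [interTime, waitTime_one h0, waitTime_two h0, tsub_zero]

theorem loopReward_one (γ : ℝ) (R : ℕ → Ω → ℝ) (h0 : X 0 ω = s) :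
    loopReward γ X R s 1 ω = discountedSumUntil γ (R · ω) (retTime X s ω) := by
  simp only [loopReward, discountedSumUntil, interTime_one h0, waitTime_one h0,
    ENat.toNat_zero, zero_add]

end Visits

theorem integrable_discPow_retTime {Ω S : Type*} [MeasurableSpace Ω] [MeasurableSpace S]
    [MeasurableSingletonClass S] {μ : Measure Ω} [IsFiniteMeasure μ] {X : ℕ → Ω → S}
    (hX : ∀ t, Measurable (X t)) (s : S) {γ : ℝ} (hγ0 : 0 ≤ γ) (hγ1 : γ ≤ 1) :
    Integrable (fun ω ↦ discPow γ (retTime X s ω)) μ :=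
  .of_bound ((Measurable.of_discrete (f := discPow γ)).comp
    (measurable_retTime hX s)).aestronglyMeasurable 1
    (.of_forall fun _ ↦ abs_discPow_le_one hγ0 hγ1 _)

theorem ae_retTime_ne_top_of_lintegral_ne_top {Ω S : Type*} [MeasurableSpace Ω]
    [MeasurableSpace S] [MeasurableSingletonClass S] {μ : Measure Ω} {X : ℕ → Ω → S}
    (hX : ∀ t, Measurable (X t)) {s : S} (hrec : ∫⁻ ω, (retTime X s ω : ℝ≥0∞) ∂μ ≠ ⊤) :
    ∀ᵐ ω ∂μ, retTime X s ω ≠ ⊤ := by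
  have hmeas : Measurable fun ω ↦ (retTime X s ω : ℝ≥0∞) :=
    (Measurable.of_discrete (f := ENat.toENNReal)).comp (measurable_retTime hX s)
  filter_upwards [ae_lt_top hmeas hrec] with ω hω
  exact ENat.toENNReal_ne_top.1 hω.ne

/-- `A` is determined by the states of the process `X` up to time `m`: the assertion, for discrete
states, that `A` belongs to the σ-algebra generated by `X 0, …, X m`. -/
def IsDeterminedUpTo {Ω S : Type*} (X : ℕ → Ω → S) (m : ℕ) (A : Set Ω) : Prop :=
  ∀ ω ∈ A, ∀ ω', (∀ i ≤ m, X i ω' = X i ω) → ω' ∈ A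

theorem isDeterminedUpTo_setOf_retTime_eq {Ω S : Type*} (X : ℕ → Ω → S) (s : S) (m : ℕ) :
    IsDeterminedUpTo X m {ω | retTime X s ω = m} := by
  intro ω (hω : retTime X s ω = m) ω' hωω'
  obtain ⟨hm, hX, hnot⟩ := retTime_eq_natCast_iff.1 hω
  refine retTime_eq_natCast_iff.2 ⟨hm, (hωω' m le_rfl).trans hX, fun k hkm hk ↦ ?_⟩
  rw [hωω' k hkm.le]
  exact hnot k hkm hk

/-- The process of states and rewards from time `m` on, as a random element of the path space.
The index is `t + m` so that `m = 0` gives the original process definitionally. -/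
def trajectoryFrom {Ω S E : Type*} (X : ℕ → Ω → S) (R : ℕ → Ω → E) (m : ℕ) (ω : Ω) :
    ℕ → S × E :=
  fun t ↦ (X (t + m) ω, R (t + m) ω)

theorem measurable_trajectoryFrom {Ω S E : Type*} [MeasurableSpace Ω] [MeasurableSpace S]
    [MeasurableSpace E] {X : ℕ → Ω → S} {R : ℕ → Ω → E} (hX : ∀ t, Measurable (X t))
    (hR : ∀ t, Measurable (R t)) (m : ℕ) : Measurable (trajectoryFrom X R m) :=
  measurable_pi_lambda _ fun t ↦ (hX (t + m)).prodMk (hR (t + m))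

/-- `(X, R)` is a Markov reward process under `μ` with transition weights `P` and reward laws `ν`:
its finite-dimensional laws are those of a Markov chain whose rewards are drawn, independently
given the states, from `ν` at the current state. The initial law is arbitrary. -/
structure IsMarkovRewardProcess {Ω S E : Type*} [MeasurableSpace Ω] [MeasurableSpace S]
    [MeasurableSpace E] (μ : Measure Ω) (X : ℕ → Ω → S) (R : ℕ → Ω → E) (P : S → S → ℝ≥0∞)
    (ν : S → Measure E) : Prop where
  measurable_state : ∀ t, Measurable (X t)
  measurable_reward : ∀ t, Measurable (R t)
  isProbabilityMeasure_reward : ∀ x, IsProbabilityMeasure (ν x)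
  law : ∀ (t : ℕ) (h : Fin (t + 1) → S) (B : Fin (t + 1) → Set E), (∀ i, MeasurableSet (B i)) →
    μ {ω | ∀ i : Fin (t + 1), X i.val ω = h i ∧ R i.val ω ∈ B i}
      = μ {ω | X 0 ω = h 0} * (∏ i : Fin t, P (h i.castSucc) (h i.succ))
        * ∏ i : Fin (t + 1), ν (h i) (B i)

namespace IsMarkovRewardProcess

variable {Ω S E : Type*} [MeasurableSpace Ω] [MeasurableSpace S] [MeasurableSpace E]
  {μ : Measure Ω} {X : ℕ → Ω → S} {R : ℕ → Ω → E} {P : S → S → ℝ≥0∞} {ν : S → Measure E}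

theorem measure_cylinder (h : IsMarkovRewardProcess μ X R P ν) (t : ℕ) (x : ℕ → S)
    {B : ℕ → Set E} (hB : ∀ i, MeasurableSet (B i)) :
    μ {ω | ∀ i ≤ t, X i ω = x i ∧ R i ω ∈ B i}
      = μ {ω | X 0 ω = x 0} * (∏ i ∈ Finset.range t, P (x i) (x (i + 1)))
        * ∏ i ∈ Finset.range (t + 1), ν (x i) (B i) := by
  rw [Finset.prod_range, Finset.prod_range]
  simpa only [Fin.forall_iff, Nat.lt_succ_iff, Fin.val_castSucc, Fin.val_succ, Fin.val_zero]
    using h.law t (x ·) (B ·) (hB ·)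

theorem measure_path (h : IsMarkovRewardProcess μ X R P ν) (t : ℕ) (x : ℕ → S) :
    μ {ω | ∀ i ≤ t, X i ω = x i}
      = μ {ω | X 0 ω = x 0} * ∏ i ∈ Finset.range t, P (x i) (x (i + 1)) := by
  have := h.isProbabilityMeasure_reward
  simpa using h.measure_cylinder t x (B := fun _ ↦ Set.univ) fun _ ↦ .univ

theorem measure_path_inter_cylinder (h : IsMarkovRewardProcess μ X R P ν) (m t : ℕ) (x : ℕ → S)
    {B : ℕ → Set E} (hB : ∀ i, MeasurableSet (B i)) :
    μ {ω | X 0 ω = x m} * μ ({ω | ∀ i ≤ m, X i ω = x i} ∩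
        {ω | ∀ i ≤ t, X (i + m) ω = x (i + m) ∧ R (i + m) ω ∈ B i})
      = μ {ω | ∀ i ≤ m, X i ω = x i} *
        μ {ω | ∀ i ≤ t, X i ω = x (i + m) ∧ R i ω ∈ B i} := by
  have := h.isProbabilityMeasure_reward
  let B' (i : ℕ) : Set E := if i < m then Set.univ else B (i - m)
  have hB' (i : ℕ) : MeasurableSet (B' i) := by
    dsimp only [B']
    split_ifs
    exacts [.univ, hB _]
  have hinter : {ω | ∀ i ≤ m, X i ω = x i} ∩
        {ω | ∀ i ≤ t, X (i + m) ω = x (i + m) ∧ R (i + m) ω ∈ B i}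
      = {ω | ∀ i ≤ m + t, X i ω = x i ∧ R i ω ∈ B' i} := by
    ext ω
    constructor
    · rintro ⟨hpast, hfuture⟩ i hi
      obtain him | ⟨j, rfl⟩ : i < m ∨ ∃ j, i = j + m :=
        (lt_or_ge i m).imp_right fun h ↦ ⟨i - m, by omega⟩
      · exact ⟨hpast i him.le, by simp [B', him]⟩
      · simpa [B'] using hfuture j (by omega)
    · refine fun hω ↦ ⟨fun i hi ↦ (hω i (by omega)).1, fun i hi ↦ ?_⟩
      simpa [B'] using hω (i + m) (by omega)
  have hpast : ∏ i ∈ Finset.range m, ν (x i) (B' i) = 1 :=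
    Finset.prod_eq_one fun i hi ↦ by simp [B', Finset.mem_range.1 hi]
  have hfuture (i : ℕ) : B' (m + i) = B i := by simp [B']
  rw [hinter, h.measure_cylinder _ x hB', h.measure_path,
    h.measure_cylinder t (fun i ↦ x (i + m)) hB, add_assoc m t 1, Finset.prod_range_add _ m t,
    Finset.prod_range_add _ m (t + 1), hpast]
  simp only [hfuture, add_comm _ m, add_zero, ← add_assoc]
  ring

theorem measure_past_inter_future (h : IsMarkovRewardProcess μ X R P ν) {m : ℕ} {p g : ℕ → S}
    (hpg : p m = g 0) (t : ℕ) {B : ℕ → Set E} (hB : ∀ i, MeasurableSet (B i)) :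
    μ {ω | X 0 ω = g 0} * μ ({ω | ∀ i ≤ m, X i ω = p i} ∩
        {ω | ∀ i ≤ t, X (i + m) ω = g i ∧ R (i + m) ω ∈ B i})
      = μ {ω | ∀ i ≤ m, X i ω = p i} * μ {ω | ∀ i ≤ t, X i ω = g i ∧ R i ω ∈ B i} := by
  let x (i : ℕ) : S := if i ≤ m then p i else g (i - m)
  have hpast : {ω | ∀ i ≤ m, X i ω = x i} = {ω | ∀ i ≤ m, X i ω = p i} := by
    ext ω
    exact forall₂_congr fun i hi ↦ by simp only [x, if_pos hi]
  have hfuture (i : ℕ) : x (i + m) = g i := by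
    cases i <;> simp [x, hpg]
  have hxm : x m = g 0 := by simpa using hfuture 0
  simpa only [hpast, hfuture, hxm] using h.measure_path_inter_cylinder m t x hB

variable [Countable S] [MeasurableSingletonClass S]

theorem measure_inter_cylinder (h : IsMarkovRewardProcess μ X R P ν) {m : ℕ} {x : S} {A : Set Ω}
    (hAx : A ⊆ {ω | X m ω = x}) (hA : IsDeterminedUpTo X m A) (t : ℕ) (g : ℕ → S)
    {B : ℕ → Set E} (hB : ∀ i, MeasurableSet (B i)) :
    μ {ω | X 0 ω = x} * μ (A ∩ {ω | ∀ i ≤ t, X (i + m) ω = g i ∧ R (i + m) ω ∈ B i})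
      = μ A * μ ({ω | X 0 ω = x} ∩ {ω | ∀ i ≤ t, X i ω = g i ∧ R i ω ∈ B i}) := by
  let C (k : ℕ) : Set Ω := {ω | ∀ i ≤ t, X (i + k) ω = g i ∧ R (i + k) ω ∈ B i}
  change μ {ω | X 0 ω = x} * μ (A ∩ C m) = μ A * μ ({ω | X 0 ω = x} ∩ C 0)
  have hstart {k : ℕ} {ω : Ω} (hω : ω ∈ C k) : X k ω = g 0 := by
    simpa using (hω 0 t.zero_le).1
  obtain hg | rfl := ne_or_eq x (g 0)
  · have hm : A ∩ C m = ∅ := Set.eq_empty_of_forall_notMem fun ω hω ↦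
      hg ((hAx hω.1).symm.trans (hstart hω.2))
    have h0 : {ω | X 0 ω = x} ∩ C 0 = ∅ := Set.eq_empty_of_forall_notMem fun ω hω ↦
      hg (Eq.symm hω.1 |>.trans (hstart hω.2))
    rw [hm, h0, measure_empty, mul_zero, mul_zero]
  have hC0 : C 0 ⊆ {ω | X 0 ω = g 0} := fun ω hω ↦ hstart hω
  rw [Set.inter_eq_right.2 hC0, mul_comm (μ A)]
  refine measure_eq_of_forall_history (μ := μ {ω | X 0 ω = g 0} • μ) (κ := μ (C 0) • μ)
    h.measurable_state m fun ω₀ ↦ ?_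
  simp only [Measure.smul_apply, smul_eq_mul]
  by_cases hω₀ : ω₀ ∈ A
  · have hm : X m ω₀ = g 0 := hAx hω₀
    have hfiber : {ω | ∀ i ≤ m, X i ω = X i ω₀} ⊆ A := hA ω₀ hω₀
    rw [Set.inter_right_comm, Set.inter_eq_right.2 hfiber,
      h.measure_past_inter_future (p := (X · ω₀)) hm t hB, mul_comm]
    rfl
  · have hdisj : A ∩ {ω | ∀ i ≤ m, X i ω = X i ω₀} = ∅ :=
      Set.eq_empty_of_forall_notMem fun ω hω ↦
        hω₀ (hA ω hω.1 ω₀ fun i hi ↦ (hω.2 i hi).symm)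
    rw [Set.inter_right_comm, hdisj, Set.empty_inter, measure_empty, mul_zero, mul_zero]

theorem map_trajectoryFrom_restrict [IsFiniteMeasure μ] (h : IsMarkovRewardProcess μ X R P ν)
    {m : ℕ} {x : S} {A : Set Ω} (hAx : A ⊆ {ω | X m ω = x}) (hA : IsDeterminedUpTo X m A) :
    μ {ω | X 0 ω = x} • (μ.restrict A).map (trajectoryFrom X R m)
      = μ A • (μ.restrict {ω | X 0 ω = x}).map (trajectoryFrom X R 0) := by
  have := Measure.smul_finite ((μ.restrict A).map (trajectoryFrom X R m))
    (measure_ne_top μ {ω | X 0 ω = x})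
  refine measure_path_ext fun t g B hB ↦ ?_
  have htraj := measurable_trajectoryFrom h.measurable_state h.measurable_reward
  have hmeas : MeasurableSet {z : ℕ → S × E | ∀ i ≤ t, (z i).1 = g i ∧ (z i).2 ∈ B i} :=
    measurableSet_setOfPred.2 <| .forall fun i ↦ .forall fun _ ↦
      (measurableSet_setOfPred.1 (measurable_fst.comp (measurable_pi_apply i)
        (measurableSet_singleton (g i)))).and
      (measurableSet_setOfPred.1 (measurable_snd.comp (measurable_pi_apply i) (hB i)))
  simp only [Measure.smul_apply, smul_eq_mul, Measure.map_apply (htraj _) hmeas,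
    Measure.restrict_apply (htraj _ hmeas)]
  rw [Set.inter_comm _ A, Set.inter_comm _ {ω | X 0 ω = x}]
  exact h.measure_inter_cylinder hAx hA t g hB

theorem map_trajectoryFrom_restrict_of_start [IsProbabilityMeasure μ]
    (h : IsMarkovRewardProcess μ X R P ν) {m : ℕ} {s : S} (hstart : ∀ᵐ ω ∂μ, X 0 ω = s)
    {A : Set Ω} (hAs : A ⊆ {ω | X m ω = s}) (hA : IsDeterminedUpTo X m A) :
    (μ.restrict A).map (trajectoryFrom X R m) = μ A • μ.map (trajectoryFrom X R 0) := by
  have hrestrict : μ.restrict {ω | X 0 ω = s} = μ := Measure.restrict_eq_self_of_ae_mem hstart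
  have hone : μ {ω | X 0 ω = s} = 1 := by
    rw [← Measure.restrict_apply_univ, hrestrict, measure_univ]
  simpa only [hrestrict, hone, one_smul] using h.map_trajectoryFrom_restrict hAs hA

theorem ae_forall_reward (h : IsMarkovRewardProcess μ X R P ν) {p : E → Prop}
    (hp : ∀ x, ∀ᵐ r ∂ν x, p r) : ∀ᵐ ω ∂μ, ∀ t, p (R t ω) := by
  refine ae_all_iff.2 fun t ↦ ?_
  -- Comparison with the zero measure reduces the claim to one history at a time.
  change μ {ω | ¬p (R t ω)} = (0 : Measure Ω) ∅
  refine measure_eq_of_forall_history h.measurable_state t fun ω₀ ↦ ?_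
  let N : Set E := toMeasurable (ν (X t ω₀)) {r | ¬p r}
  have hN : ν (X t ω₀) N = 0 := (measure_toMeasurable _).trans (hp (X t ω₀))
  let B (i : ℕ) : Set E := if i = t then N else Set.univ
  have hB (i : ℕ) : MeasurableSet (B i) := by
    dsimp only [B]
    split_ifs
    exacts [measurableSet_toMeasurable _ _, .univ]
  have hzero : μ {ω | ∀ i ≤ t, X i ω = X i ω₀ ∧ R i ω ∈ B i} = 0 := by
    rw [h.measure_cylinder t (X · ω₀) hB,
      Finset.prod_eq_zero (Finset.self_mem_range_succ t) (by simp [B, hN]), mul_zero]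
  rw [Measure.coe_zero, Pi.zero_apply]
  refine measure_mono_null ?_ hzero
  rintro ω ⟨hω, hpast⟩ i hi
  refine ⟨hpast i hi, ?_⟩
  dsimp only [B]
  split_ifs with hit
  · exact subset_toMeasurable _ _ (hit ▸ hω)
  · trivial

theorem ae_forall_exists_return [IsProbabilityMeasure μ] (h : IsMarkovRewardProcess μ X R P ν)
    {s : S} (hstart : ∀ᵐ ω ∂μ, X 0 ω = s) (hrec : ∀ᵐ ω ∂μ, retTime X s ω ≠ ⊤) :
    ∀ᵐ ω ∂μ, ∀ m, X m ω = s → ∃ k, 0 < k ∧ X (k + m) ω = s := by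
  refine ae_all_iff.2 fun m ↦ ?_
  have hvisit : MeasurableSet {ω | X m ω = s} :=
    h.measurable_state m (measurableSet_singleton s)
  have htraj := measurable_trajectoryFrom h.measurable_state h.measurable_reward
  have hmeas : MeasurableSet {z : ℕ → S × E | ∃ k, 0 < k ∧ (z k).1 = s} :=
    measurableSet_setOfPred.2 <| .exists fun k ↦ measurable_const.and <|
      measurableSet_setOfPred.1 (measurable_fst.comp (measurable_pi_apply k)
        (measurableSet_singleton s))
  have hlaw := h.map_trajectoryFrom_restrict_of_start hstart (Set.Subset.refl {ω | X m ω = s})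
    fun ω hω ω' hωω' ↦ (hωω' m le_rfl).trans hω
  have hreturn : ∀ᵐ z ∂(μ.restrict {ω | X m ω = s}).map (trajectoryFrom X R m),
      ∃ k, 0 < k ∧ (z k).1 = s := by
    rw [hlaw]
    refine Measure.ae_smul_measure ((ae_map_iff (htraj 0).aemeasurable hmeas).2 ?_) _
    filter_upwards [hrec] with ω hω using retTime_ne_top_iff.1 hω
  exact (ae_restrict_iff' hvisit).1 ((ae_map_iff (htraj m).aemeasurable hmeas).1 hreturn)

theorem ae_infinite_setOf_visit [IsProbabilityMeasure μ] (h : IsMarkovRewardProcess μ X R P ν)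
    {s : S} (hstart : ∀ᵐ ω ∂μ, X 0 ω = s) (hrec : ∀ᵐ ω ∂μ, retTime X s ω ≠ ⊤) :
    ∀ᵐ ω ∂μ, {t | X t ω = s}.Infinite := by
  filter_upwards [hstart, h.ae_forall_exists_return hstart hrec] with ω h0 hret
  exact infinite_setOf_visit h0 hret

variable [IsProbabilityMeasure μ] {s : S}

theorem setIntegral_comp_trajectoryFrom (h : IsMarkovRewardProcess μ X R P ν)
    (hstart : ∀ᵐ ω ∂μ, X 0 ω = s) {m : ℕ} {A : Set Ω} (hAs : A ⊆ {ω | X m ω = s})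
    (hA : IsDeterminedUpTo X m A) {F : (ℕ → S × E) → ℝ} (hF : Measurable F) :
    ∫ ω in A, F (trajectoryFrom X R m ω) ∂μ
      = μ.real A * ∫ ω, F (trajectoryFrom X R 0 ω) ∂μ := by
  have htraj (k : ℕ) := measurable_trajectoryFrom h.measurable_state h.measurable_reward k
  rw [← integral_map (htraj m).aemeasurable hF.aestronglyMeasurable,
    h.map_trajectoryFrom_restrict_of_start hstart hAs hA, integral_smul_measure,
    integral_map (htraj 0).aemeasurable hF.aestronglyMeasurable, smul_eq_mul, measureReal_def]

theorem integral_mul_comp_trajectoryFrom (h : IsMarkovRewardProcess μ X R P ν)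
    (hstart : ∀ᵐ ω ∂μ, X 0 ω = s) {T : Ω → ℕ∞} (hT : Measurable T)
    (hTs : ∀ m : ℕ, {ω | T ω = m} ⊆ {ω | X m ω = s})
    (hTdet : ∀ m : ℕ, IsDeterminedUpTo X m {ω | T ω = m})
    {φ : ℕ∞ → ℝ} (hφtop : φ ⊤ = 0) (hφ : Integrable (fun ω ↦ φ (T ω)) μ)
    {F : (ℕ → S × E) → ℝ} (hF : Measurable F)
    (hφF : Integrable (fun ω ↦ φ (T ω) * F (trajectoryFrom X R (T ω).toNat ω)) μ) :
    ∫ ω, φ (T ω) * F (trajectoryFrom X R (T ω).toNat ω) ∂μ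
      = (∫ ω, φ (T ω) ∂μ) * ∫ ω, F (trajectoryFrom X R 0 ω) ∂μ := by
  have hfiber (n : ℕ∞) : MeasurableSet (T ⁻¹' {n}) := hT (measurableSet_singleton n)
  have hsum {f : Ω → ℝ} (hf : Integrable f μ) :
      HasSum (fun n ↦ ∫ ω in T ⁻¹' {n}, f ω ∂μ) (∫ ω, f ω ∂μ) := by
    have hcover : ⋃ n, T ⁻¹' {n} = Set.univ := by
      rw [← Set.preimage_iUnion, Set.iUnion_of_singleton, Set.preimage_univ]
    simpa only [hcover, setIntegral_univ] using
      hasSum_integral_iUnion hfiber (pairwise_disjoint_fiber T) hf.integrableOn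
  have hterm (n : ℕ∞) : ∫ ω in T ⁻¹' {n}, φ (T ω) * F (trajectoryFrom X R (T ω).toNat ω) ∂μ
      = (∫ ω in T ⁻¹' {n}, φ (T ω) ∂μ) * ∫ ω, F (trajectoryFrom X R 0 ω) ∂μ := by
    rw [setIntegral_congr_fun (g := fun ω ↦ φ n * F (trajectoryFrom X R n.toNat ω))
        (hfiber n) fun ω (hω : T ω = n) ↦ by simp only [hω],
      setIntegral_congr_fun (g := fun _ ↦ φ n) (hfiber n) fun ω (hω : T ω = n) ↦ congrArg φ hω,
      setIntegral_const, integral_const_mul, smul_eq_mul]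
    induction n with
    | top => simp only [hφtop, zero_mul, mul_zero]
    | coe m =>
      have hm : ∫ ω in T ⁻¹' {(m : ℕ∞)}, F (trajectoryFrom X R m ω) ∂μ
          = μ.real (T ⁻¹' {(m : ℕ∞)}) * ∫ ω, F (trajectoryFrom X R 0 ω) ∂μ :=
        h.setIntegral_comp_trajectoryFrom hstart (hTs m) (hTdet m) hF
      rw [ENat.toNat_natCast, hm]
      ring
  refine (hsum hφF).unique ?_
  simpa only [hterm] using (hsum hφ).mul_right (∫ ω, F (trajectoryFrom X R 0 ω) ∂μ)

end IsMarkovRewardProcess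

namespace IsMarkovRewardProcess

variable {Ω S : Type*} [MeasurableSpace Ω] [Countable S] [MeasurableSpace S]
  [MeasurableSingletonClass S] {μ : Measure Ω}
  {X : ℕ → Ω → S} {R : ℕ → Ω → ℝ} {P : S → S → ℝ≥0∞} {ν : S → Measure ℝ} {s : S} {γ C : ℝ}

theorem integral_discountedSum_nonneg (h : IsMarkovRewardProcess μ X R P ν)
    (hnonneg : ∀ x, ∀ᵐ r ∂ν x, 0 ≤ r) (hγ0 : 0 ≤ γ) :
    0 ≤ ∫ ω, discountedSum γ (R · ω) ∂μ := by
  refine integral_nonneg_of_ae ?_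
  filter_upwards [h.ae_forall_reward hnonneg] with ω hω
  exact tsum_nonneg fun t ↦ mul_nonneg (pow_nonneg hγ0 t) (hω t)

variable [IsProbabilityMeasure μ]

theorem integrable_discPow_retTime_mul_discountedSum (h : IsMarkovRewardProcess μ X R P ν)
    (hbdd : ∀ x, ∀ᵐ r ∂ν x, |r| ≤ C) (hγ0 : 0 ≤ γ) (hγ1 : γ < 1) (s : S) :
    Integrable (fun ω ↦ discPow γ (retTime X s ω) *
      discountedSum γ fun t ↦ R (t + (retTime X s ω).toNat) ω) μ := by
  have hshift (n : ℕ∞) : Measurable fun ω ↦ discountedSum γ fun t ↦ R (t + n.toNat) ω :=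
    (measurable_discountedSum γ).comp (measurable_pi_lambda _ fun t ↦ h.measurable_reward _)
  have hmeas : Measurable fun ω ↦ discountedSum γ fun t ↦ R (t + (retTime X s ω).toNat) ω :=
    (measurable_from_prod_countable_right (f := fun p : ℕ∞ × Ω ↦
      discountedSum γ fun t ↦ R (t + p.1.toNat) p.2) hshift).comp
      ((measurable_retTime h.measurable_state s).prodMk measurable_id)
  refine (integrable_discPow_retTime h.measurable_state s hγ0 hγ1.le).mul_bdd
    hmeas.aestronglyMeasurable (c := (1 - γ)⁻¹ * C) ?_
  filter_upwards [h.ae_forall_reward hbdd] with ω hω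
  exact abs_discountedSum_le hγ0 hγ1 fun t ↦ hω _

theorem integral_discPow_retTime_mul_discountedSum (h : IsMarkovRewardProcess μ X R P ν)
    (hbdd : ∀ x, ∀ᵐ r ∂ν x, |r| ≤ C) (hγ0 : 0 ≤ γ) (hγ1 : γ < 1) (hstart : ∀ᵐ ω ∂μ, X 0 ω = s) :
    ∫ ω, discPow γ (retTime X s ω) *
        discountedSum γ (fun t ↦ R (t + (retTime X s ω).toNat) ω) ∂μ
      = (∫ ω, discPow γ (retTime X s ω) ∂μ) * ∫ ω, discountedSum γ (R · ω) ∂μ :=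
  h.integral_mul_comp_trajectoryFrom hstart (measurable_retTime h.measurable_state s)
    (fun _ _ hω ↦ (retTime_eq_natCast_iff.1 hω).2.1) (isDeterminedUpTo_setOf_retTime_eq X s)
    discPow_top (integrable_discPow_retTime h.measurable_state s hγ0 hγ1.le)
    (F := fun z ↦ discountedSum γ fun t ↦ (z t).2)
    ((measurable_discountedSum γ).comp (by fun_prop))
    (h.integrable_discPow_retTime_mul_discountedSum hbdd hγ0 hγ1 s)

theorem integrable_discountedSum (h : IsMarkovRewardProcess μ X R P ν)
    (hbdd : ∀ x, ∀ᵐ r ∂ν x, |r| ≤ C) (hγ0 : 0 ≤ γ) (hγ1 : γ < 1) :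
    Integrable (fun ω ↦ discountedSum γ (R · ω)) μ := by
  refine .of_bound ((measurable_discountedSum γ).comp
    (measurable_pi_lambda _ h.measurable_reward)).aestronglyMeasurable ((1 - γ)⁻¹ * C) ?_
  filter_upwards [h.ae_forall_reward hbdd] with ω hω
  exact abs_discountedSum_le hγ0 hγ1 hω

theorem integral_discountedSum_eq_add (h : IsMarkovRewardProcess μ X R P ν)
    (hbdd : ∀ x, ∀ᵐ r ∂ν x, |r| ≤ C) (hγ0 : 0 ≤ γ) (hγ1 : γ < 1) (hstart : ∀ᵐ ω ∂μ, X 0 ω = s) :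
    ∫ ω, discountedSum γ (R · ω) ∂μ
      = ∫ ω, discountedSumUntil γ (R · ω) (retTime X s ω) ∂μ
        + (∫ ω, discPow γ (retTime X s ω) ∂μ) * ∫ ω, discountedSum γ (R · ω) ∂μ := by
  have hbefore : (fun ω ↦ discountedSumUntil γ (R · ω) (retTime X s ω)) =ᵐ[μ] fun ω ↦
      discountedSum γ (R · ω) - discPow γ (retTime X s ω) *
        discountedSum γ fun t ↦ R (t + (retTime X s ω).toNat) ω := by
    filter_upwards [h.ae_forall_reward hbdd] with ω hω
    exact eq_sub_of_add_eq (discountedSum_eq_until_add hγ0 hγ1 hω (retTime X s ω)).symm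
  rw [integral_congr_ae hbefore, integral_sub (h.integrable_discountedSum hbdd hγ0 hγ1)
    (h.integrable_discPow_retTime_mul_discountedSum hbdd hγ0 hγ1 s),
    h.integral_discPow_retTime_mul_discountedSum hbdd hγ0 hγ1 hstart, sub_add_cancel]

theorem integral_discountedSum_eq_loop [DecidableEq S] (h : IsMarkovRewardProcess μ X R P ν)
    (hbdd : ∀ x, ∀ᵐ r ∂ν x, |r| ≤ C) (hγ0 : 0 ≤ γ) (hγ1 : γ < 1) (hstart : ∀ᵐ ω ∂μ, X 0 ω = s) :
    ∫ ω, discountedSum γ (R · ω) ∂μ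
      = ∫ ω, loopReward γ X R s 1 ω ∂μ
        + (∫ ω, discPow γ (interTime X s 1 ω) ∂μ) * ∫ ω, discountedSum γ (R · ω) ∂μ := by
  have hreward : (fun ω ↦ loopReward γ X R s 1 ω) =ᵐ[μ]
      fun ω ↦ discountedSumUntil γ (R · ω) (retTime X s ω) :=
    hstart.mono fun _ h0 ↦ loopReward_one γ R h0
  have hdiscount : (fun ω ↦ discPow γ (interTime X s 1 ω)) =ᵐ[μ]
      fun ω ↦ discPow γ (retTime X s ω) :=
    hstart.mono fun _ h0 ↦ congrArg (discPow γ) (interTime_one h0)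
  rw [integral_congr_ae hreward, integral_congr_ae hdiscount]
  exact h.integral_discountedSum_eq_add hbdd hγ0 hγ1 hstart

end IsMarkovRewardProcess

theorem stmt1_general {S Ω : Type*} [Countable S] [DecidableEq S] [MeasurableSpace S]
    [MeasurableSingletonClass S] [MeasurableSpace Ω] {μ : Measure Ω} [IsProbabilityMeasure μ]
    {X : ℕ → Ω → S} {R : ℕ → Ω → ℝ} {P : S → S → ℝ≥0∞} {ν : S → Measure ℝ}
    (h : IsMarkovRewardProcess μ X R P ν) {C : ℝ} (hbdd : ∀ x, ∀ᵐ r ∂ν x, |r| ≤ C)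
    {γ : ℝ} (hγ0 : 0 ≤ γ) (hγ1 : γ < 1) {s : S} (hstart : ∀ᵐ ω ∂μ, X 0 ω = s)
    (hrec : ∀ᵐ ω ∂μ, retTime X s ω ≠ ⊤) {v α β : ℝ}
    (hv : v = ∫ ω, discountedSum γ (R · ω) ∂μ)
    (hα : α = ∫ ω, discPow γ (interTime X s 1 ω) ∂μ)
    (hβ : β = ∫ ω, loopReward γ X R s 1 ω ∂μ) :
    ∀ᵐ ω ∂μ, ∀ n : ℕ, |loopEst γ X R s n ω - v|
      ≤ (1 - γ)⁻¹ * (|loopBetaHat γ X R s n ω - β| + |loopAlphaHat γ X s n ω - α| * |v|) := by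
  have hrenewal : v = β + α * v := by
    rw [hv, hα, hβ]
    exact h.integral_discountedSum_eq_loop hbdd hγ0 hγ1 hstart
  filter_upwards [h.ae_infinite_setOf_visit hstart hrec] with ω hinf n
  exact abs_div_one_sub_sub_le hγ1 (loopAlphaHat_le hγ0 hγ1.le hinf n) hrenewal

/-- deterministic error decomposition of the loop estimator: almost surely,
for every `n ≥ 1`,
`|v̂_n(s) - v(s)| ≤ (1-γ)⁻¹ (|β̂_n(s) - β(s)| + |α̂_n(s) - α(s)|·v(s))`. -/
theorem stmt1 {S : Type*} [Fintype S] [DecidableEq S] [MeasurableSpace S]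
    [MeasurableSingletonClass S]
    {Ω : Type*} [MeasurableSpace Ω] (μ : Measure Ω) [IsProbabilityMeasure μ]
    (X : ℕ → Ω → S) (R : ℕ → Ω → ℝ)
    (hX : ∀ t, Measurable (X t)) (hR : ∀ t, Measurable (R t))
    (P : S → S → ℝ≥0∞) (hrow : ∀ x, ∑ y, P x y = 1)
    (ν : S → Measure ℝ) (hν : ∀ x, IsProbabilityMeasure (ν x))
    (rmax : ℝ) (hrmax : 0 ≤ rmax) (hsupp : ∀ x, ν x (Set.Icc 0 rmax)ᶜ = 0)
    (hlaw : ∀ (t : ℕ) (h : Fin (t + 1) → S) (B : Fin (t + 1) → Set ℝ),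
      (∀ i, MeasurableSet (B i)) →
      μ {ω | ∀ i : Fin (t + 1), X i.val ω = h i ∧ R i.val ω ∈ B i}
        = μ {ω | X 0 ω = h 0} * (∏ i : Fin t, P (h i.castSucc) (h i.succ))
          * ∏ i : Fin (t + 1), ν (h i) (B i))
    (γ : ℝ) (hγ0 : 0 ≤ γ) (hγ1 : γ < 1)
    (s : S)
    (hstart : μ {ω | X 0 ω = s} = 1)
    (hrec : ∫⁻ ω, (retTime X s ω : ℝ≥0∞) ∂μ ≠ ⊤)
    -- the value `v(s)`, the expected loop discount `α(s)` and loop reward `β(s)`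
    (v α β : ℝ)
    (hv : v = ∫ ω, ∑' t : ℕ, γ ^ t * R t ω ∂μ)
    (hα : α = ∫ ω, discPow γ (interTime X s 1 ω) ∂μ)
    (hβ : β = ∫ ω, loopReward γ X R s 1 ω ∂μ) :
    ∀ᵐ ω ∂μ, ∀ n : ℕ, 1 ≤ n →
      |loopEst γ X R s n ω - v|
        ≤ (1 - γ)⁻¹ * (|loopBetaHat γ X R s n ω - β| + |loopAlphaHat γ X s n ω - α| * v) := by
  have h : IsMarkovRewardProcess μ X R P ν := ⟨hX, hR, hν, hlaw⟩
  have hrange (x : S) : ∀ᵐ r ∂ν x, r ∈ Set.Icc 0 rmax := hsupp x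
  have hbdd (x : S) : ∀ᵐ r ∂ν x, |r| ≤ rmax :=
    (hrange x).mono fun r hr ↦ (abs_of_nonneg hr.1).trans_le hr.2
  have hstart_ae : ∀ᵐ ω ∂μ, X 0 ω = s :=
    (mem_ae_iff_prob_eq_one (hX 0 (measurableSet_singleton s))).2 hstart
  have hrec_ae := ae_retTime_ne_top_of_lintegral_ne_top hX hrec
  have hnonneg (x : S) : ∀ᵐ r ∂ν x, 0 ≤ r := (hrange x).mono fun _ ↦ And.left
  have hv0 : 0 ≤ v := (h.integral_discountedSum_nonneg hnonneg hγ0).trans_eq hv.symm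
  filter_upwards [stmt1_general h hbdd hγ0 hγ1 hstart_ae hrec_ae hv hα hβ] with ω hω n _
  simpa only [abs_of_nonneg hv0] using hω n
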